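/- arXiv:2603.16369 — 2 statements merged into one kernel-verified Lean document; each statement's English description precedes it below -/
import Mathlib

section
/- If f(z) = Σ_{n≥0} a_n z^n is holomorphic on the unit disk D with |f(z)| ≤ 1 on D, then for all n ≥ 1 and |z| < 1, |f^{(n)}(z)|/n! ≤ (1 - |f(z)|^2) / ((1-|z|)^{n-1}(1-|z|^2)). -/
open Metric

/-!
Precomposing `f` with a disk automorphism moves `z` to the origin: `f = g ∘ τ` with
`τ ζ = (ζ - z) / (1 - conj z * ζ)` and `|g| ≤ 1`. Wiener's inequality bounds every Taylor
coefficient of `g` at `0` of positive order by `1 - |g 0| ^ 2 = 1 - |f z| ^ 2`. To carry the bound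
back through `τ`, write `g = g 0 + w G`, so that `f = f z + (ζ - z) T G` where
`T G ζ = (1 - conj z * ζ)⁻¹ G (τ ζ)`. Expanding `G` once more turns the divided difference of `T G`
at `z` into `(1 - |z| ^ 2)⁻¹ (conj z * T G + T H)`, with `H` the divided difference of `G` at `0`.
Each further Taylor coefficient therefore costs only a factor `(1 + |z|) / (1 - |z| ^ 2)`.
-/

open Filter Real
open scoped Topology ComplexConjugate Nat

section TaylorCoeff

variable {𝕜 E : Type*} [NontriviallyNormedField 𝕜] [NormedAddCommGroup E] [NormedSpace 𝕜 E]

/-- The `n`-th Taylor coefficient `f⁽ⁿ⁾(a) / n!` of `f` at `a`. -/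
noncomputable def taylorCoeff (f : 𝕜 → E) (a : 𝕜) (n : ℕ) : E :=
  (n ! : 𝕜)⁻¹ • iteratedDeriv n f a

lemma taylorCoeff_zero (f : 𝕜 → E) (a : 𝕜) : taylorCoeff f a 0 = f a := by
  simp [taylorCoeff]

lemma taylorCoeff_congr {f g : 𝕜 → E} {a : 𝕜} (h : f =ᶠ[𝓝 a] g) (n : ℕ) :
    taylorCoeff f a n = taylorCoeff g a n := by
  rw [taylorCoeff, taylorCoeff, h.iteratedDeriv_eq n]

lemma analyticAt_dslope {f : 𝕜 → E} {a : 𝕜} (hf : AnalyticAt 𝕜 f a) :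
    AnalyticAt 𝕜 (dslope f a) a :=
  let ⟨_, hp⟩ := hf
  hp.has_fpower_series_dslope_fslope.analyticAt

variable [CharZero 𝕜] [CompleteSpace E]

lemma taylorCoeff_eq_coeff {f : 𝕜 → E} {a : 𝕜} {p : FormalMultilinearSeries 𝕜 𝕜 E}
    (hp : HasFPowerSeriesAt f p a) (n : ℕ) : taylorCoeff f a n = p.coeff n := by
  obtain ⟨r, hpr⟩ := hp
  have hfac : (n ! : 𝕜) ≠ 0 := Nat.cast_ne_zero.mpr n.factorial_ne_zero
  have hcoeff : n ! • p.coeff n = iteratedDeriv n f a := by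
    rw [iteratedDeriv_eq_iteratedFDeriv, ← hpr.factorial_smul 1 n]
    rfl
  rw [taylorCoeff, ← hcoeff, ← Nat.cast_smul_eq_nsmul 𝕜, inv_smul_smul₀ hfac]

lemma taylorCoeff_smul_add_smul {f g : 𝕜 → E} {a : 𝕜} (hf : AnalyticAt 𝕜 f a)
    (hg : AnalyticAt 𝕜 g a) (c d : 𝕜) (n : ℕ) :
    taylorCoeff (fun x ↦ c • f x + d • g x) a n =
      c • taylorCoeff f a n + d • taylorCoeff g a n := by
  obtain ⟨p, hp⟩ := hf
  obtain ⟨q, hq⟩ := hg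
  have hpq : HasFPowerSeriesAt (fun x ↦ c • f x + d • g x) (c • p + d • q) a :=
    (hp.const_smul (c := c)).add (hq.const_smul (c := d))
  rw [taylorCoeff_eq_coeff hpq, taylorCoeff_eq_coeff hp, taylorCoeff_eq_coeff hq]
  rfl

lemma taylorCoeff_dslope {f : 𝕜 → E} {a : 𝕜} (hf : AnalyticAt 𝕜 f a) (n : ℕ) :
    taylorCoeff (dslope f a) a n = taylorCoeff f a (n + 1) := by
  obtain ⟨p, hp⟩ := hf
  rw [taylorCoeff_eq_coeff hp, taylorCoeff_eq_coeff hp.has_fpower_series_dslope_fslope,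
    FormalMultilinearSeries.coeff_fslope]

lemma taylorCoeff_succ_of_eventually_eq {f g : 𝕜 → E} {a : 𝕜} (hg : AnalyticAt 𝕜 g a)
    (hfg : ∀ᶠ x in 𝓝 a, f x = f a + (x - a) • g x) (n : ℕ) :
    taylorCoeff f a (n + 1) = taylorCoeff g a n := by
  have hf : AnalyticAt 𝕜 f a :=
    (show AnalyticAt 𝕜 (fun x ↦ f a + (x - a) • g x) a by fun_prop).congr
      (hfg.mono fun _ h ↦ h.symm)
  have hslope : dslope f a =ᶠ[𝓝[≠] a] g := by
    filter_upwards [self_mem_nhdsWithin, hfg.filter_mono nhdsWithin_le_nhds] with x hx hfgx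
    apply smul_right_injective E (sub_ne_zero.mpr hx)
    simp only [sub_smul_dslope, hfgx, add_sub_cancel_left]
  have hslope_nhds : dslope f a =ᶠ[𝓝 a] g :=
    ((analyticAt_dslope hf).continuousAt.eventuallyEq_nhds_iff_eventuallyEq_nhdsNE
      hg.continuousAt).mp hslope
  rw [← taylorCoeff_dslope hf, taylorCoeff_congr hslope_nhds]

end TaylorCoeff

section MobiusComp

variable {𝕜 E : Type*} [NontriviallyNormedField 𝕜] [NormedAddCommGroup E] [NormedSpace 𝕜 E]

/-- The weighted composition operator `G ↦ (1 - b x)⁻¹ • G (τ x)` for the Möbius map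
`τ x = (x - a) / (1 - b x)`. The weight makes the family of these functions stable under divided
differences at `a`; `x / 0 = 0` applies at the pole of `τ`. -/
noncomputable def mobiusComp (a b : 𝕜) (G : 𝕜 → E) (x : 𝕜) : E :=
  (1 - b * x)⁻¹ • G ((x - a) / (1 - b * x))

variable {a b : 𝕜} {G : 𝕜 → E}

lemma analyticAt_mobiusComp (hG : AnalyticAt 𝕜 G 0) (hab : 1 - b * a ≠ 0) :
    AnalyticAt 𝕜 (mobiusComp a b G) a := by
  have hmob : AnalyticAt 𝕜 (fun x ↦ (x - a) / (1 - b * x)) a := by fun_prop (disch := exact hab)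
  have hcomp : AnalyticAt 𝕜 (fun x ↦ G ((x - a) / (1 - b * x))) a :=
    AnalyticAt.fun_comp (by simpa using hG) hmob
  exact .smul (.inv (by fun_prop) hab) hcomp

lemma comp_mobius_eq_add_smul (x : 𝕜) :
    G ((x - a) / (1 - b * x)) = G 0 + (x - a) • mobiusComp a b (dslope G 0) x := by
  have h := sub_smul_dslope G 0 ((x - a) / (1 - b * x))
  rw [sub_zero] at h
  rw [mobiusComp, smul_smul, ← div_eq_mul_inv, h, add_sub_cancel]

lemma mobiusComp_self : mobiusComp a b G a = (1 - b * a)⁻¹ • G 0 := by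
  simp [mobiusComp]

lemma mobiusComp_eq_add_smul (hab : 1 - b * a ≠ 0) {x : 𝕜} (hx : 1 - b * x ≠ 0) :
    mobiusComp a b G x = mobiusComp a b G a + (x - a) • ((b / (1 - b * a)) • mobiusComp a b G x +
      (1 - b * a)⁻¹ • mobiusComp a b (dslope G 0) x) := by
  simp only [mobiusComp_self]
  have hT : mobiusComp a b G x =
      (1 - b * x)⁻¹ • (G 0 + (x - a) • mobiusComp a b (dslope G 0) x) :=
    congrArg ((1 - b * x)⁻¹ • ·) (comp_mobius_eq_add_smul x)
  rw [hT]
  match_scalars <;> field_simp <;> ring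

variable [CharZero 𝕜] [CompleteSpace E]

lemma taylorCoeff_mobiusComp_succ (hG : AnalyticAt 𝕜 G 0) (hab : 1 - b * a ≠ 0) (n : ℕ) :
    taylorCoeff (mobiusComp a b G) a (n + 1) =
      (b / (1 - b * a)) • taylorCoeff (mobiusComp a b G) a n +
        (1 - b * a)⁻¹ • taylorCoeff (mobiusComp a b (dslope G 0)) a n := by
  have hT := analyticAt_mobiusComp hG hab
  have hTd := analyticAt_mobiusComp (analyticAt_dslope hG) hab
  have hden : ∀ᶠ x in 𝓝 a, 1 - b * x ≠ 0 :=
    (show ContinuousAt (fun x ↦ 1 - b * x) a by fun_prop).eventually_ne hab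
  rw [← taylorCoeff_smul_add_smul hT hTd]
  exact taylorCoeff_succ_of_eventually_eq (by fun_prop)
    (hden.mono fun x hx ↦ mobiusComp_eq_add_smul hab hx) n

lemma norm_taylorCoeff_mobiusComp_le (hG : AnalyticAt 𝕜 G 0) (hab : 1 - b * a ≠ 0) {M : ℝ}
    (hM : ∀ j, ‖taylorCoeff G 0 j‖ ≤ M) (n : ℕ) :
    ‖taylorCoeff (mobiusComp a b G) a n‖ ≤ (1 + ‖b‖) ^ n / ‖1 - b * a‖ ^ (n + 1) * M := by
  induction n generalizing G with
  | zero =>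
    have h0 := hM 0
    rw [taylorCoeff_zero] at h0
    rw [taylorCoeff_zero, mobiusComp_self, norm_smul, norm_inv]
    simpa using mul_le_mul_of_nonneg_left h0 (inv_nonneg.mpr (norm_nonneg (1 - b * a)))
  | succ n ih =>
    have hd := ih (analyticAt_dslope hG) fun j ↦ taylorCoeff_dslope hG j ▸ hM (j + 1)
    calc
      ‖taylorCoeff (mobiusComp a b G) a (n + 1)‖
        ≤ ‖b‖ / ‖1 - b * a‖ * ‖taylorCoeff (mobiusComp a b G) a n‖ +
            ‖1 - b * a‖⁻¹ * ‖taylorCoeff (mobiusComp a b (dslope G 0)) a n‖ := by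
          rw [taylorCoeff_mobiusComp_succ hG hab, ← norm_div, ← norm_inv, ← norm_smul,
            ← norm_smul]
          exact norm_add_le _ _
      _ ≤ ‖b‖ / ‖1 - b * a‖ * ((1 + ‖b‖) ^ n / ‖1 - b * a‖ ^ (n + 1) * M) +
            ‖1 - b * a‖⁻¹ * ((1 + ‖b‖) ^ n / ‖1 - b * a‖ ^ (n + 1) * M) := by
          gcongr
          exact ih hG hM
      _ = (1 + ‖b‖) ^ (n + 1) / ‖1 - b * a‖ ^ (n + 1 + 1) * M := by
          have := norm_ne_zero_iff.mpr hab
          field_simp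
          ring

lemma norm_taylorCoeff_comp_mobius_le (hG : AnalyticAt 𝕜 G 0) (hab : 1 - b * a ≠ 0) {M : ℝ}
    (hM : ∀ j, ‖taylorCoeff G 0 (j + 1)‖ ≤ M) (n : ℕ) :
    ‖taylorCoeff (fun x ↦ G ((x - a) / (1 - b * x))) a (n + 1)‖ ≤
      (1 + ‖b‖) ^ n / ‖1 - b * a‖ ^ (n + 1) * M := by
  have hexpand : ∀ᶠ x in 𝓝 a, G ((x - a) / (1 - b * x)) =
      G ((a - a) / (1 - b * a)) + (x - a) • mobiusComp a b (dslope G 0) x :=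
    .of_forall fun x ↦ by simpa using comp_mobius_eq_add_smul x
  rw [taylorCoeff_succ_of_eventually_eq (analyticAt_mobiusComp (analyticAt_dslope hG) hab) hexpand]
  exact norm_taylorCoeff_mobiusComp_le (analyticAt_dslope hG) hab
    (fun j ↦ taylorCoeff_dslope hG j ▸ hM j) n

end MobiusComp

section Wiener

lemma norm_circleAverage_le_of_norm_le {E : Type*} [NormedAddCommGroup E] [NormedSpace ℝ E]
    {f : ℂ → E} {u : ℂ → ℝ} {c : ℂ} {r : ℝ} (hu : CircleIntegrable u c r)
    (h : ∀ z ∈ sphere c |r|, ‖f z‖ ≤ u z) :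
    ‖circleAverage f c r‖ ≤ circleAverage u c r := by
  rw [circleAverage_def, circleAverage_def, norm_smul, smul_eq_mul,
    norm_of_nonneg (by positivity)]
  gcongr
  exact intervalIntegral.norm_integral_le_of_norm_le two_pi_pos.le
    (.of_forall fun θ _ ↦ h _ (circleMap_mem_sphere' c r θ)) hu

lemma circleAverage_norm_sq_one_add_mul_pow_zero_one (a : ℂ) {k : ℕ} (hk : k ≠ 0) :
    circleAverage (fun z ↦ ‖1 + a * z ^ k‖ ^ 2) 0 1 = 1 + ‖a‖ ^ 2 := by
  let p : Polynomial ℂ := 1 + Polynomial.monomial k a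
  have hsupport : p.support ⊆ {0, k} := by
    intro i
    contrapose!
    simp +contextual [p, Polynomial.coeff_one, Polynomial.coeff_monomial, eq_comm]
  calc
    circleAverage (fun z ↦ ‖1 + a * z ^ k‖ ^ 2) 0 1 = ∑ i ∈ p.support, ‖p.coeff i‖ ^ 2 := by
      rw [p.sum_sq_norm_coeff_eq_circleAverage]
      simp [p]
    _ = ∑ i ∈ {0, k}, ‖p.coeff i‖ ^ 2 :=
      Finset.sum_subset hsupport (by simp +contextual)
    _ = 1 + ‖a‖ ^ 2 := by
      simp [p, hk, hk.symm, Polynomial.coeff_one, Polynomial.coeff_monomial]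

lemma circleAverage_norm_sq_one_add_mul_pow (c μ : ℂ) (r : ℝ) {k : ℕ} (hk : k ≠ 0) :
    circleAverage (fun z ↦ ‖1 + μ * (z - c) ^ k‖ ^ 2) c r = 1 + (‖μ‖ * r ^ k) ^ 2 := by
  rw [circleAverage_eq_circleAverage_zero_one]
  simp only [add_sub_cancel_right, mul_pow (r : ℂ), ← mul_assoc]
  rw [circleAverage_norm_sq_one_add_mul_pow_zero_one _ hk]
  rw [norm_mul, norm_pow, Complex.norm_real, norm_eq_abs, mul_pow, mul_pow, ← abs_pow, sq_abs]

variable {E : Type*} [NormedAddCommGroup E] [NormedSpace ℂ E] [CompleteSpace E]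
  {f : ℂ → E} {c : ℂ} {r : ℝ}

lemma circleAverage_inv_pow_smul (hr : 0 < r) (hf : DiffContOnCl ℂ f (ball c r)) (n : ℕ) :
    circleAverage (fun z ↦ ((z - c) ^ n)⁻¹ • f z) c r = taylorCoeff f c n := by
  have hcauchy := hf.circleIntegral_one_div_sub_center_pow_smul hr n
  simp only [circleAverage_eq_circleIntegral hr.ne', smul_smul, ← mul_inv, ← pow_succ']
  simp only [one_div] at hcauchy
  rw [hcauchy, smul_smul, div_eq_mul_inv, inv_mul_cancel_left₀ Complex.two_pi_I_ne_zero,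
    taylorCoeff]

lemma circleAverage_inv_pow_mul_sq_smul (hr : 0 < r) (hf : DiffContOnCl ℂ f (ball c r)) {k : ℕ}
    (hk : k ≠ 0) (μ : ℂ) :
    circleAverage (fun z ↦ (((z - c) ^ k)⁻¹ * (1 + μ * (z - c) ^ k) ^ 2) • f z) c r =
      taylorCoeff f c k + (2 * μ) • f c := by
  have hne : ∀ z ∈ sphere c |r|, (z - c) ^ k ≠ 0 := fun z hz ↦
    pow_ne_zero k (sub_ne_zero.mpr (ne_of_mem_sphere hz (abs_pos.mpr hr.ne').ne'))
  have hfc : ContinuousOn f (sphere c |r|) := by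
    rw [abs_of_pos hr]
    exact hf.continuousOn_ball.mono sphere_subset_closedBall
  have hholo : DiffContOnCl ℂ (fun z ↦ (2 * μ + μ ^ 2 * (z - c) ^ k) • f z) (ball c |r|) := by
    rw [abs_of_pos hr]
    exact (show Differentiable ℂ fun z : ℂ ↦ 2 * μ + μ ^ 2 * (z - c) ^ k by
      fun_prop).diffContOnCl.smul hf
  have hpolar : CircleIntegrable (fun z ↦ ((z - c) ^ k)⁻¹ • f z) c r :=
    ContinuousOn.circleIntegrable' (.smul (.inv₀ (by fun_prop) hne) hfc)
  have hregular : CircleIntegrable (fun z ↦ (2 * μ + μ ^ 2 * (z - c) ^ k) • f z) c r :=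
    ContinuousOn.circleIntegrable' (.smul (by fun_prop) hfc)
  have hsplit : Set.EqOn (fun z ↦ (((z - c) ^ k)⁻¹ * (1 + μ * (z - c) ^ k) ^ 2) • f z)
      (fun z ↦ ((z - c) ^ k)⁻¹ • f z + (2 * μ + μ ^ 2 * (z - c) ^ k) • f z) (sphere c |r|) := by
    intro z hz
    have := hne z hz
    simp only [← add_smul]
    congr 1
    field_simp
    ring
  rw [circleAverage_congr_sphere hsplit, circleAverage_fun_add hpolar hregular,
    circleAverage_inv_pow_smul hr hf, hholo.circleAverage]
  simp [hk]

-- On the circle the kernel `(1 + μ * (z - c) ^ k) ^ 2 / (z - c) ^ k` has modulus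
-- `|1 + μ * (z - c) ^ k| ^ 2 / r ^ k`, whose mean is given by Parseval's identity.
lemma norm_taylorCoeff_add_smul_le (hr : 0 < r) (hf : DiffContOnCl ℂ f (ball c r))
    (hbd : ∀ z ∈ sphere c r, ‖f z‖ ≤ 1) {k : ℕ} (hk : k ≠ 0) (μ : ℂ) :
    ‖taylorCoeff f c k + (2 * μ) • f c‖ ≤ (r ^ k)⁻¹ * (1 + (‖μ‖ * r ^ k) ^ 2) := by
  rw [← circleAverage_inv_pow_mul_sq_smul hr hf hk,
    ← circleAverage_norm_sq_one_add_mul_pow c μ r hk, ← smul_eq_mul, ← circleAverage_fun_smul]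
  refine norm_circleAverage_le_of_norm_le (ContinuousOn.circleIntegrable' (by fun_prop))
    fun z hz ↦ ?_
  rw [abs_of_pos hr] at hz
  rw [norm_smul, norm_mul, norm_inv, norm_pow, norm_pow, mem_sphere_iff_norm.mp hz, smul_eq_mul]
  exact mul_le_of_le_one_right (by positivity) (hbd z hz)

lemma norm_taylorCoeff_mul_pow_le_of_diffContOnCl {f : ℂ → ℂ} (hr : 0 < r)
    (hf : DiffContOnCl ℂ f (ball c r)) (hbd : ∀ z ∈ sphere c r, ‖f z‖ ≤ 1) {k : ℕ} (hk : k ≠ 0) :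
    ‖taylorCoeff f c k‖ * r ^ k ≤ 1 - ‖f c‖ ^ 2 := by
  set A := taylorCoeff f c k
  have hrk : 0 < r ^ k := pow_pos hr k
  obtain ⟨u, hu, hA⟩ : ∃ u : ℂ, ‖u‖ = 1 ∧ A = ‖A‖ * u :=
    ⟨Complex.exp (A.arg * Complex.I), Complex.norm_exp_ofReal_mul_I _,
      (Complex.norm_mul_exp_arg_mul_I A).symm⟩
  -- With `μ = u * conj (f c) / r ^ k` both summands of `A + 2 * μ * f c` have the phase `u` of `A`.
  have halign : A + (2 * (u * conj (f c) / r ^ k)) • f c =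
      ((‖A‖ + 2 * ‖f c‖ ^ 2 / r ^ k : ℝ) : ℂ) * u := by
    have hconj := Complex.conj_mul' (f c)
    push_cast
    rw [smul_eq_mul]
    linear_combination hA + 2 * u / r ^ k * hconj
  have h := norm_taylorCoeff_add_smul_le hr hf hbd hk (u * conj (f c) / r ^ k)
  have hnorm : ‖u * conj (f c) / r ^ k‖ = ‖f c‖ / r ^ k := by
    simp [hu, abs_of_pos hr]
  rw [halign, hnorm, norm_mul, hu, Complex.norm_real, norm_of_nonneg (by positivity), mul_one,
    div_mul_cancel₀ _ hrk.ne', ← div_eq_inv_mul, le_div_iff₀ hrk, add_mul,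
    div_mul_cancel₀ _ hrk.ne'] at h
  linarith

lemma norm_taylorCoeff_mul_pow_le {f : ℂ → ℂ} (hr : 0 < r) (hf : DifferentiableOn ℂ f (ball c r))
    (hbd : ∀ z ∈ ball c r, ‖f z‖ ≤ 1) {k : ℕ} (hk : k ≠ 0) :
    ‖taylorCoeff f c k‖ * r ^ k ≤ 1 - ‖f c‖ ^ 2 := by
  have htendsto : Tendsto (fun s : ℝ ↦ ‖taylorCoeff f c k‖ * s ^ k) (𝓝[<] r)
      (𝓝 (‖taylorCoeff f c k‖ * r ^ k)) :=
    (Continuous.tendsto (by fun_prop) r).mono_left nhdsWithin_le_nhds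
  refine le_of_tendsto htendsto ?_
  filter_upwards [Ioo_mem_nhdsLT hr] with s hs
  have hsub : closedBall c s ⊆ ball c r := closedBall_subset_ball hs.2
  exact norm_taylorCoeff_mul_pow_le_of_diffContOnCl hs.1 (hf.diffContOnCl_ball hsub)
    (fun z hz ↦ hbd z (hsub (sphere_subset_closedBall hz))) hk

end Wiener

section DiskAut

/-- The automorphism `w ↦ (w - a) / (1 - conj a * w)` of the unit disk, for `‖a‖ < 1`. It sends `a`
to `0`. -/
noncomputable def diskAut (a w : ℂ) : ℂ := (w - a) / (1 - conj a * w)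

variable {a w : ℂ}

lemma one_sub_conj_mul_ne_zero (ha : ‖a‖ < 1) (hw : ‖w‖ < 1) : 1 - conj a * w ≠ 0 := by
  have hlt : ‖conj a * w‖ < 1 := by
    rw [norm_mul, RCLike.norm_conj]
    exact mul_lt_one_of_nonneg_of_lt_one_left (norm_nonneg a) ha hw.le
  intro h
  rw [← sub_eq_zero.mp h, norm_one] at hlt
  exact hlt.false

lemma sq_norm_one_sub_conj_mul_sub_sq_norm_sub (a w : ℂ) :
    ‖1 - conj a * w‖ ^ 2 - ‖w - a‖ ^ 2 = (1 - ‖a‖ ^ 2) * (1 - ‖w‖ ^ 2) := by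
  simp only [Complex.sq_norm, Complex.normSq_apply, Complex.sub_re, Complex.sub_im,
    Complex.mul_re, Complex.mul_im, Complex.one_re, Complex.one_im, Complex.conj_re,
    Complex.conj_im]
  ring

lemma norm_diskAut_lt_one (ha : ‖a‖ < 1) (hw : ‖w‖ < 1) : ‖diskAut a w‖ < 1 := by
  have hden : 0 < ‖1 - conj a * w‖ := norm_pos_iff.mpr (one_sub_conj_mul_ne_zero ha hw)
  have hpos : 0 < (1 - ‖a‖ ^ 2) * (1 - ‖w‖ ^ 2) :=
    mul_pos (sub_pos.mpr (pow_lt_one₀ (norm_nonneg a) ha two_ne_zero))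
      (sub_pos.mpr (pow_lt_one₀ (norm_nonneg w) hw two_ne_zero))
  rw [← sq_norm_one_sub_conj_mul_sub_sq_norm_sub, sub_pos] at hpos
  rw [diskAut, norm_div, div_lt_one hden]
  exact lt_of_pow_lt_pow_left₀ 2 hden.le hpos

lemma mapsTo_diskAut_ball (ha : ‖a‖ < 1) : Set.MapsTo (diskAut a) (ball 0 1) (ball 0 1) :=
  fun _ hw ↦ mem_ball_zero_iff.mpr (norm_diskAut_lt_one ha (mem_ball_zero_iff.mp hw))

lemma differentiableOn_diskAut_ball (ha : ‖a‖ < 1) :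
    DifferentiableOn ℂ (diskAut a) (ball 0 1) :=
  .div (by fun_prop) (by fun_prop) fun _ hw ↦
    one_sub_conj_mul_ne_zero ha (mem_ball_zero_iff.mp hw)

lemma diskAut_neg_diskAut (ha : ‖a‖ < 1) (hw : ‖w‖ < 1) : diskAut (-a) (diskAut a w) = w := by
  have hden := one_sub_conj_mul_ne_zero ha hw
  have hden' : 1 - conj (-a) * diskAut a w ≠ 0 :=
    one_sub_conj_mul_ne_zero (norm_neg a ▸ ha) (norm_diskAut_lt_one ha hw)
  have hcancel : diskAut a w * (1 - conj a * w) = w - a := div_mul_cancel₀ _ hden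
  rw [diskAut, div_eq_iff hden', map_neg]
  linear_combination hcancel

end DiskAut

lemma norm_taylorCoeff_succ_le_of_norm_le_one {f : ℂ → ℂ} (hf : DifferentiableOn ℂ f (ball 0 1))
    (hbd : ∀ w ∈ ball (0 : ℂ) 1, ‖f w‖ ≤ 1) {z : ℂ} (hz : ‖z‖ < 1) (n : ℕ) :
    ‖taylorCoeff f z (n + 1)‖ ≤
      (1 + ‖z‖) ^ n / (1 - ‖z‖ ^ 2) ^ (n + 1) * (1 - ‖f z‖ ^ 2) := by
  have hz' : ‖-z‖ < 1 := by rwa [norm_neg]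
  let g : ℂ → ℂ := f ∘ diskAut (-z)
  have hg : DifferentiableOn ℂ g (ball 0 1) :=
    hf.comp (differentiableOn_diskAut_ball hz') (mapsTo_diskAut_ball hz')
  have hg_bd : ∀ w ∈ ball (0 : ℂ) 1, ‖g w‖ ≤ 1 := fun w hw ↦ hbd _ (mapsTo_diskAut_ball hz' hw)
  have hg_zero : g 0 = f z := by simp [g, diskAut]
  have hwiener : ∀ j, ‖taylorCoeff g 0 (j + 1)‖ ≤ 1 - ‖f z‖ ^ 2 := fun j ↦ by
    simpa [hg_zero] using norm_taylorCoeff_mul_pow_le one_pos hg hg_bd j.succ_ne_zero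
  have hfg : f =ᶠ[𝓝 z] fun x ↦ g ((x - z) / (1 - conj z * x)) := by
    filter_upwards [isOpen_ball.mem_nhds (mem_ball_zero_iff.mpr hz)] with x hx
    exact congrArg f (diskAut_neg_diskAut hz (mem_ball_zero_iff.mp hx)).symm
  have hnorm : ‖1 - conj z * z‖ = 1 - ‖z‖ ^ 2 := by
    rw [Complex.conj_mul', ← Complex.ofReal_pow, ← Complex.ofReal_one, ← Complex.ofReal_sub,
      Complex.norm_real, norm_of_nonneg]
    exact sub_nonneg.mpr (pow_le_one₀ (norm_nonneg z) hz.le)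
  have hg_an : AnalyticAt ℂ g 0 := hg.analyticAt (ball_mem_nhds 0 one_pos)
  rw [taylorCoeff_congr hfg, ← hnorm, ← RCLike.norm_conj z]
  exact norm_taylorCoeff_comp_mobius_le hg_an (one_sub_conj_mul_ne_zero hz hz) hwiener n

theorem stmt_1 (f : ℂ → ℂ)
    (hf : DifferentiableOn ℂ f (ball (0 : ℂ) 1))
    (hbd : ∀ z ∈ ball (0 : ℂ) 1, ‖f z‖ ≤ 1) :
    ∀ n : ℕ, 1 ≤ n → ∀ z ∈ ball (0 : ℂ) 1,
      ‖iteratedDerivWithin n f (ball (0 : ℂ) 1) z‖ / (Nat.factorial n)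
        ≤ (1 - ‖f z‖ ^ 2) / ((1 - ‖z‖) ^ (n - 1) * (1 - ‖z‖ ^ 2)) := by
  intro n hn z hz
  obtain ⟨m, rfl⟩ := Nat.exists_eq_add_of_le' hn
  have hz1 : ‖z‖ < 1 := mem_ball_zero_iff.mp hz
  have hsub : 1 - ‖z‖ ≠ 0 := (sub_pos.mpr hz1).ne'
  have hadd : 1 + ‖z‖ ≠ 0 := by positivity
  have hfactor : 1 - ‖z‖ ^ 2 = (1 - ‖z‖) * (1 + ‖z‖) := by ring
  calc
    ‖iteratedDerivWithin (m + 1) f (ball 0 1) z‖ / (m + 1)! = ‖taylorCoeff f z (m + 1)‖ := by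
      rw [iteratedDerivWithin_of_isOpen isOpen_ball hz, taylorCoeff, norm_smul, norm_inv,
        Complex.norm_natCast, div_eq_inv_mul]
    _ ≤ (1 + ‖z‖) ^ m / (1 - ‖z‖ ^ 2) ^ (m + 1) * (1 - ‖f z‖ ^ 2) :=
      norm_taylorCoeff_succ_le_of_norm_le_one hf hbd hz1 m
    _ = (1 - ‖f z‖ ^ 2) / ((1 - ‖z‖) ^ (m + 1 - 1) * (1 - ‖z‖ ^ 2)) := by
      rw [hfactor, Nat.add_sub_cancel, mul_pow]
      field_simp
      ring
end

section
/- Let m ∈ ℕ ∪ {0}, β > -m, B_X the unit ball of a complex Banach space X, and F : B_X → closure(D^n) holomorphic with F(z) = Σ_{s≥m} P_s(z), where P_s(z) = (1/s!)D^sF(0)(z^s). Assume ‖P_m(z)‖_∞ is constant on ∂B_X and |(P_m)_j(z_0)| = ‖P_m(z_0)‖_∞ for all j and all z_0 ∈ ∂B_X. Then Σ_{s≥m} ‖P_s(z)‖_∞/(β+s) ≤ r^m/(m+β) for ‖z‖ = r ≤ R(β), where R(β) is the unique root in (0,1) of 1/(β+m) = 2 Σ_{s≥m+1} r^{s-m}/(β+s).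 -/
open Metric

/-!
On a complex line through 0, `ζ ↦ F (ζ • z₀)` is a power series in `ζ` divisible by `ζ ^ m`,
and the maximum principle shows that the quotient is still bounded by `1`. For a scalar power series
`∑ aₖ ζᵏ` bounded by `1` on the disc, Borel–Carathéodory gives `|a₁| ≤ 2 (1 - |a₀|)`, and averaging
over `k`-th roots of unity turns this into `|aₖ| ≤ 2 (1 - |a₀|)`. As all components of `P m z₀` have
the same modulus, the components of the quotient share the same `|a₀|`, and the bound holds for the
maximum norm. So if the leading norm falls short of `1` by `δ`, the tail of the weighted sum is at
most `2 δ` times the tail of the weights, which the radius condition bounds by `δ` times the leading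
weight.
-/

open Filter Topology
open scoped ENNReal

lemma hasFPowerSeriesOnBall_zero_of_hasSum {𝕜 F : Type*} [RCLike 𝕜] [NormedAddCommGroup F]
    [NormedSpace 𝕜 F] {f : 𝕜 → F} {a : ℕ → F} {R : ℝ≥0∞} (hR : 0 < R)
    (hf : ∀ z ∈ eball (0 : 𝕜) R, HasSum (fun i => z ^ i • a i) (f z)) :
    HasFPowerSeriesOnBall f (fun i => ContinuousMultilinearMap.mkPiRing 𝕜 (Fin i) (a i)) 0 R where
  r_le := ENNReal.le_of_forall_nnreal_lt fun ρ hρ =>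
    FormalMultilinearSeries.le_radius_of_tendsto _ (l := 0) <| by
      have hmem : ((ρ : ℝ) : 𝕜) ∈ eball (0 : 𝕜) R := by
        simpa [mem_eball, edist_zero_right, ← ofReal_norm] using hρ
      simpa [norm_smul, mul_comm] using (hf _ hmem).summable.tendsto_atTop_zero.norm
  r_pos := hR
  hasSum {z} hz := by simpa using hf z hz

lemma pow_mul_norm_le_of_norm_pow_mul_norm_le {E : Type*} [NormedAddCommGroup E] [NormedSpace ℂ E]
    {f : ℂ → E} {m : ℕ} {C R : ℝ}
    (hf : DifferentiableOn ℂ f (ball 0 R))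
    (hbound : ∀ z ∈ ball (0 : ℂ) R, ‖z‖ ^ m * ‖f z‖ ≤ C) {z : ℂ} (hz : z ∈ ball (0 : ℂ) R) :
    R ^ m * ‖f z‖ ≤ C := by
  have hinner : ∀ ρ ∈ Set.Ioo ‖z‖ R, ρ ^ m * ‖f z‖ ≤ C := by
    rintro ρ ⟨hzρ, hρR⟩
    have hρ0 : 0 < ρ := (norm_nonneg z).trans_lt hzρ
    have hcl : closure (ball (0 : ℂ) ρ) ⊆ ball 0 R :=
      closure_ball_subset_closedBall.trans (closedBall_subset_ball hρR)
    rw [← le_div_iff₀' (by positivity)]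
    refine Complex.norm_le_of_forall_mem_frontier_norm_le isBounded_ball
      (hf.mono hcl).diffContOnCl (fun w hw => ?_) (subset_closure (mem_ball_zero_iff.mpr hzρ))
    rw [frontier_ball 0 hρ0.ne', mem_sphere_zero_iff_norm] at hw
    rw [le_div_iff₀' (by positivity), ← hw]
    exact hbound w (mem_ball_zero_iff.mpr (hw.trans_lt hρR))
  have hlim : Tendsto (fun ρ : ℝ => ρ ^ m * ‖f z‖) (𝓝[<] R) (𝓝 (R ^ m * ‖f z‖)) :=
    ((continuous_id.pow m).mul continuous_const).continuousWithinAt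
  exact le_of_tendsto hlim (eventually_of_mem (Ioo_mem_nhdsLT (mem_ball_zero_iff.mp hz)) hinner)

lemma norm_deriv_zero_le_of_re_le {f : ℂ → ℂ} {R M : ℝ} (hR : 0 < R)
    (hf : DifferentiableOn ℂ f (ball 0 R)) (hre : ∀ z ∈ ball (0 : ℂ) R, (f z).re ≤ M) :
    ‖deriv f 0‖ ≤ 2 * (M - (f 0).re) / R := by
  have hM : 0 ≤ M - (f 0).re := sub_nonneg.mpr (hre 0 (mem_ball_self hR))
  refine le_of_forall_gt_imp_ge_of_dense fun C hC => ?_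
  obtain ⟨N, hMN, hNC⟩ : ∃ N, M - (f 0).re < N ∧ 2 * N / R < C := by
    obtain ⟨N, hMN, hNC⟩ := exists_between ((div_lt_iff₀ hR).mp hC)
    exact ⟨N / 2, by linarith, by rw [div_lt_iff₀ hR]; linarith⟩
  have hgrowth : ∀ z ∈ ball (0 : ℂ) R, ‖f z - f 0‖ ≤ 2 * N / (R - ‖z‖) * ‖z - 0‖ := by
    intro z hz
    rw [sub_zero, div_mul_eq_mul_div]
    refine Complex.borelCaratheodory_zero (hM.trans_lt hMN) (hf.sub_const _) (fun w hw => ?_) hR hz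
      (sub_self _)
    have := hre w hw
    simp only [Set.mem_ofPred_eq, Complex.sub_re]
    linarith
  have hconst : ∀ᶠ z : ℂ in 𝓝 0, 2 * N / (R - ‖z‖) < C := by
    have hcont : ContinuousAt (fun z : ℂ => 2 * N / (R - ‖z‖)) 0 :=
      continuousAt_const.div (by fun_prop) (by simpa using hR.ne')
    exact hcont.eventually_lt_const (by simpa using hNC)
  have hderiv : HasDerivAt f (deriv f 0) 0 :=
    (hf.differentiableAt (ball_mem_nhds 0 hR)).hasDerivAt
  have hC0 : 0 ≤ C := le_trans (by positivity) hC.le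
  refine hderiv.le_of_lip' hC0 ?_
  filter_upwards [ball_mem_nhds 0 hR, hconst] with z hz hzC
  exact (hgrowth z hz).trans (by gcongr)

lemma sum_pow_pow_eq_ite_of_isPrimitiveRoot {A : Type*} [CommRing A] [IsDomain A] {ω : A} {k : ℕ}
    (hω : IsPrimitiveRoot ω k) (i : ℕ) :
    ∑ j ∈ Finset.range k, (ω ^ j) ^ i = if k ∣ i then (k : A) else 0 := by
  simp_rw [pow_right_comm ω _ i]
  split_ifs with hki
  · simp [(hω.pow_eq_one_iff_dvd i).mpr hki]
  · have hne : ω ^ i ≠ 1 := mt (hω.pow_eq_one_iff_dvd i).mp hki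
    refine (mul_eq_zero.mp ?_).resolve_left (sub_ne_zero_of_ne hne.symm)
    rw [mul_neg_geom_sum, pow_right_comm, hω.pow_eq_one, one_pow, sub_self]

/-- The sequence `a` is the coefficient sequence of a function in the Schur class, i.e. of a
holomorphic function on the open unit disc with values in the closed unit ball of `E`. The function
is given by its power series, so that coefficient sequences can be manipulated without naming it. -/
def IsSchurSeries {E : Type*} [NormedAddCommGroup E] [NormedSpace ℂ E] (a : ℕ → E) : Prop :=
  ∀ z ∈ ball (0 : ℂ) 1, ∃ y, HasSum (fun i => z ^ i • a i) y ∧ ‖y‖ ≤ 1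

namespace IsSchurSeries

variable {E : Type*} [NormedAddCommGroup E] [NormedSpace ℂ E]

lemma of_hasSum_pow_add [CompleteSpace E] {a : ℕ → E} {m : ℕ} {g : ℂ → E}
    (hg : ∀ z ∈ ball (0 : ℂ) 1, HasSum (fun i => z ^ (m + i) • a i) (g z))
    (hbound : ∀ z ∈ ball (0 : ℂ) 1, ‖g z‖ ≤ 1) : IsSchurSeries a := by
  have hsum : ∀ z ∈ ball (0 : ℂ) 1, Summable fun i => z ^ i • a i := by
    intro z hz
    rcases eq_or_ne z 0 with rfl | hz0
    · exact (hasSum_single 0 fun i hi => by simp [hi]).summable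
    · simpa only [pow_add, mul_smul, inv_smul_smul₀ (pow_ne_zero m hz0)] using
        (hg z hz).summable.const_smul (z ^ m)⁻¹
  have hdiff : DifferentiableOn ℂ (fun z : ℂ => ∑' i, z ^ i • a i) (ball 0 1) := by
    simpa only [← ENNReal.ofReal_one, eball_ofReal] using
      (hasFPowerSeriesOnBall_zero_of_hasSum (R := ENNReal.ofReal 1) (by simp) fun z hz =>
        (hsum z (by rwa [eball_ofReal] at hz)).hasSum).differentiableOn
  have hfactor : ∀ z ∈ ball (0 : ℂ) 1, g z = z ^ m • ∑' i, z ^ i • a i := fun z hz =>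
    (hg z hz).unique <| by
      simpa only [pow_add, mul_smul] using (hsum z hz).hasSum.const_smul (z ^ m)
  refine fun z hz => ⟨_, (hsum z hz).hasSum, ?_⟩
  simpa only [one_pow, one_mul] using pow_mul_norm_le_of_norm_pow_mul_norm_le (m := m) hdiff
    (fun w hw => by simpa only [hfactor w hw, norm_smul, norm_pow] using hbound w hw) hz

-- Wiener's trick: averaging over the rotations by `k`-th roots of unity keeps the bound and kills
-- every coefficient whose index is not a multiple of `k`.
lemma comp_mul_left {a : ℕ → E} (ha : IsSchurSeries a) {k : ℕ} (hk : k ≠ 0) :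
    IsSchurSeries fun l => a (k * l) := by
  intro w hw
  obtain ⟨z, rfl⟩ := IsAlgClosed.exists_pow_nat_eq w (Nat.pos_of_ne_zero hk)
  set ω := Complex.exp (2 * Real.pi * Complex.I / k)
  have hω : IsPrimitiveRoot ω k := Complex.isPrimitiveRoot_exp k hk
  have hrot : ∀ j : ℕ, ω ^ j * z ∈ ball (0 : ℂ) 1 := fun j => by
    simpa [hω.norm'_eq_one hk, pow_lt_one_iff_of_nonneg, hk] using hw
  choose y hy hy1 using fun j => ha _ (hrot j)
  have hk' : (k : ℂ) ≠ 0 := Nat.cast_ne_zero.mpr hk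
  refine ⟨(k : ℂ)⁻¹ • ∑ j ∈ Finset.range k, y j, ?_, ?_⟩
  · have havg : HasSum (fun i => if k ∣ i then z ^ i • a i else 0)
        ((k : ℂ)⁻¹ • ∑ j ∈ Finset.range k, y j) := by
      convert (hasSum_sum fun j _ => hy j).const_smul (k : ℂ)⁻¹ using 2 with i
      simp_rw [mul_pow, ← Finset.sum_smul, ← Finset.sum_mul,
        sum_pow_pow_eq_ite_of_isPrimitiveRoot hω]
      split_ifs <;> simp [smul_smul, hk']
    rw [← (mul_right_injective₀ hk).hasSum_iff] at havg
    · simpa [Function.comp_def, pow_mul] using havg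
    · exact fun i hi => if_neg fun ⟨l, hl⟩ => hi ⟨l, hl.symm⟩
  · rw [norm_smul, norm_inv, Complex.norm_natCast, inv_mul_le_one₀ (by positivity)]
    calc ‖∑ j ∈ Finset.range k, y j‖ ≤ ∑ _j ∈ Finset.range k, (1 : ℝ) :=
          norm_sum_le_of_le _ fun j _ => hy1 j
      _ = k := by simp

lemma norm_apply_zero_le_one {a : ℕ → E} (ha : IsSchurSeries a) : ‖a 0‖ ≤ 1 := by
  obtain ⟨y, hy, hy1⟩ := ha 0 (mem_ball_self one_pos)
  have : y = a 0 := hy.unique <| by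
    simpa using hasSum_single (f := fun i => (0 : ℂ) ^ i • a i) 0 fun i hi => by simp [hi]
  exact this ▸ hy1

lemma norm_apply_one_le {a : ℕ → ℂ} (ha : IsSchurSeries a) : ‖a 1‖ ≤ 2 * (1 - ‖a 0‖) := by
  choose! f hf hf1 using ha
  obtain ⟨u, hu, hua⟩ := RCLike.exists_norm_eq_mul_self (a 0)
  have hseries := hasFPowerSeriesOnBall_zero_of_hasSum (R := ENNReal.ofReal 1) (by simp)
    (by simpa only [eball_ofReal] using hf)
  have hdiff : DifferentiableOn ℂ f (ball 0 1) := by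
    simpa only [eball_ofReal] using hseries.differentiableOn
  have hf0 : f 0 = a 0 := by simpa using (hseries.coeff_zero fun _ => 0).symm
  have hderiv : HasDerivAt f (a 1) 0 := by
    simpa using hseries.hasFPowerSeriesAt.hasDerivAt
  have hre : ∀ z ∈ ball (0 : ℂ) 1, (u * f z).re ≤ 1 := fun z hz =>
    (Complex.re_le_norm _).trans (by simpa [hu] using hf1 z hz)
  have := norm_deriv_zero_le_of_re_le one_pos (hdiff.const_mul u) hre
  rwa [(hderiv.const_mul u).deriv, norm_mul, hu, one_mul, hf0, ← hua, div_one] at this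

lemma norm_apply_le {a : ℕ → ℂ} (ha : IsSchurSeries a) {k : ℕ} (hk : k ≠ 0) :
    ‖a k‖ ≤ 2 * (1 - ‖a 0‖) := by
  simpa using (ha.comp_mul_left hk).norm_apply_one_le

lemma pi_apply {ι : Type*} [Fintype ι] {a : ℕ → ι → ℂ} (ha : IsSchurSeries a) (j : ι) :
    IsSchurSeries fun i => a i j := fun z hz =>
  let ⟨y, hy, hy1⟩ := ha z hz
  ⟨y j, Pi.hasSum.mp hy j, (norm_le_pi_norm y j).trans hy1⟩

lemma norm_apply_le_of_forall_norm_eq {ι : Type*} [Fintype ι] {a : ℕ → ι → ℂ} (ha : IsSchurSeries a)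
    (hmax : ∀ j, ‖a 0 j‖ = ‖a 0‖) {k : ℕ} (hk : k ≠ 0) : ‖a k‖ ≤ 2 * (1 - ‖a 0‖) := by
  rw [pi_norm_le_iff_of_nonneg (by linarith [ha.norm_apply_zero_le_one])]
  exact fun j => hmax j ▸ (ha.pi_apply j).norm_apply_le hk

end IsSchurSeries

lemma summable_and_tsum_mul_le_of_le {c v : ℕ → ℝ} (hc : ∀ i, 0 ≤ c i) (hc1 : c 0 ≤ 1)
    (hck : ∀ i, c (i + 1) ≤ 2 * (1 - c 0)) (hv : ∀ i, 0 ≤ v i) (hsum : Summable v)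
    (hv2 : 2 * ∑' i, v (i + 1) ≤ v 0) :
    Summable (fun i => c i * v i) ∧ ∑' i, c i * v i ≤ v 0 := by
  have hle : ∀ i, c (i + 1) * v (i + 1) ≤ 2 * (1 - c 0) * v (i + 1) := fun i =>
    mul_le_mul_of_nonneg_right (hck i) (hv _)
  have hmaj : Summable fun i => 2 * (1 - c 0) * v (i + 1) :=
    ((summable_nat_add_iff 1).mpr hsum).mul_left _
  have htail : Summable fun i => c (i + 1) * v (i + 1) :=
    .of_nonneg_of_le (fun i => mul_nonneg (hc _) (hv _)) hle hmaj
  have hs : Summable fun i => c i * v i := (summable_nat_add_iff 1).mp htail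
  refine ⟨hs, ?_⟩
  calc ∑' i, c i * v i = c 0 * v 0 + ∑' i, c (i + 1) * v (i + 1) := hs.tsum_eq_zero_add
    _ ≤ c 0 * v 0 + ∑' i, 2 * (1 - c 0) * v (i + 1) := by
      grw [htail.tsum_le_tsum hle hmaj]
    _ = c 0 * v 0 + (1 - c 0) * (2 * ∑' i, v (i + 1)) := by rw [tsum_mul_left]; ring
    _ ≤ c 0 * v 0 + (1 - c 0) * v 0 := by
      have : 0 ≤ 1 - c 0 := sub_nonneg.mpr hc1
      gcongr
    _ = v 0 := by ring

lemma summable_pow_div_add_of_lt_one {b r : ℝ} (hb : 0 < b) (hr : 0 ≤ r) (hr1 : r < 1) :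
    Summable fun i : ℕ => r ^ i / (b + i) :=
  .of_nonneg_of_le (fun i => by positivity)
    (fun i => div_le_div_of_nonneg_left (by positivity) hb (le_add_of_nonneg_right i.cast_nonneg))
    ((summable_geometric_of_lt_one hr hr1).div_const b)

lemma tsum_pow_succ_div_add_le {b r R : ℝ} (hb : 0 < b) (hr : 0 ≤ r) (hrR : r ≤ R) (hR : R < 1) :
    ∑' i : ℕ, r ^ (i + 1) / (b + (i + 1 : ℕ)) ≤ ∑' i : ℕ, R ^ (i + 1) / (b + (i + 1 : ℕ)) := by
  have hsum : ∀ x : ℝ, 0 ≤ x → x < 1 → Summable fun i : ℕ => x ^ (i + 1) / (b + (i + 1 : ℕ)) :=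
    fun x hx hx1 => (summable_nat_add_iff 1).mpr (summable_pow_div_add_of_lt_one hb hx hx1)
  exact (hsum r hr (hrR.trans_lt hR)).tsum_le_tsum (fun i => by gcongr)
    (hsum R (hr.trans hrR) hR)

section HomogeneousExpansion

variable {X : Type*} [NormedAddCommGroup X] [NormedSpace ℂ X] {m : ℕ}

lemma isSchurSeries_of_hasSum_homogeneous {E : Type*} [NormedAddCommGroup E] [NormedSpace ℂ E]
    [CompleteSpace E] {F : X → E} {P : ℕ → X → E}
    (hexp : ∀ z ∈ ball (0 : X) 1, HasSum (fun i => P (m + i) z) (F z))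
    (hhom : ∀ (s : ℕ) (c : ℂ) (z : X), P s (c • z) = c ^ s • P s z)
    (hbd : ∀ z ∈ ball (0 : X) 1, ‖F z‖ ≤ 1) {z₀ : X} (hz₀ : ‖z₀‖ ≤ 1) :
    IsSchurSeries fun i => P (m + i) z₀ := by
  have hdisc : ∀ ζ ∈ ball (0 : ℂ) 1, ζ • z₀ ∈ ball (0 : X) 1 := fun ζ hζ => by
    rw [mem_ball_zero_iff] at hζ ⊢
    calc ‖ζ • z₀‖ = ‖ζ‖ * ‖z₀‖ := norm_smul _ _
      _ ≤ ‖ζ‖ := mul_le_of_le_one_right (norm_nonneg _) hz₀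
      _ < 1 := hζ
  refine .of_hasSum_pow_add (m := m) (g := fun ζ => F (ζ • z₀)) (fun ζ hζ => ?_)
    fun ζ hζ => hbd _ (hdisc ζ hζ)
  simpa only [hhom] using hexp _ (hdisc ζ hζ)

lemma exists_norm_homogeneous_eq_pow_mul {ι : Type*} [Fintype ι] {F : X → ι → ℂ}
    {P : ℕ → X → ι → ℂ}
    (hexp : ∀ z ∈ ball (0 : X) 1, HasSum (fun i => P (m + i) z) (F z))
    (hhom : ∀ (s : ℕ) (c : ℂ) (z : X), P s (c • z) = c ^ s • P s z)
    (hbd : ∀ z ∈ ball (0 : X) 1, ‖F z‖ ≤ 1)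
    (hmax : ∀ (j : ι) (z₀ : X), ‖z₀‖ = 1 → ‖P m z₀ j‖ = ‖P m z₀‖) (z : X) :
    ∃ c : ℕ → ℝ, (∀ i, 0 ≤ c i) ∧ c 0 ≤ 1 ∧ (∀ i, c (i + 1) ≤ 2 * (1 - c 0)) ∧
      ∀ i, ‖P (m + i) z‖ = ‖z‖ ^ (m + i) * c i := by
  -- At `z = 0` a unit vector need not exist, since `X` may be trivial.
  obtain ⟨z₀, hz₀, hz⟩ : ∃ z₀ : X, (z₀ = 0 ∨ ‖z₀‖ = 1) ∧ z = (‖z‖ : ℂ) • z₀ := by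
    rcases eq_or_ne z 0 with rfl | hz
    · exact ⟨0, .inl rfl, by simp⟩
    · exact ⟨(‖z‖ : ℂ)⁻¹ • z, .inr (norm_smul_inv_norm hz), by simp [smul_smul, hz]⟩
  have hz₀1 : ‖z₀‖ ≤ 1 := hz₀.elim (fun h => by simp [h]) Eq.le
  have hSchur := isSchurSeries_of_hasSum_homogeneous hexp hhom hbd hz₀1
  refine ⟨fun i => ‖P (m + i) z₀‖, fun i => norm_nonneg _, hSchur.norm_apply_zero_le_one,
    fun i => ?_, fun i => ?_⟩
  · rcases hz₀ with rfl | hz₀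
    · have hP0 : P (m + (i + 1)) 0 = 0 := by simpa using hhom (m + (i + 1)) 0 0
      simpa [hP0] using hSchur.norm_apply_zero_le_one
    · exact hSchur.norm_apply_le_of_forall_norm_eq (fun j => hmax j z₀ hz₀) i.succ_ne_zero
  · conv_lhs => rw [hz, hhom, norm_smul, norm_pow, Complex.norm_real, norm_norm]

end HomogeneousExpansion

theorem stmt_17_general {X : Type*} [NormedAddCommGroup X] [NormedSpace ℂ X]
    {ι : Type*} [Fintype ι] {m : ℕ} {β : ℝ} (hβ : -(m : ℝ) < β)
    {F : X → ι → ℂ} {P : ℕ → X → ι → ℂ}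
    (hexp : ∀ z ∈ ball (0 : X) 1, HasSum (fun i => P (m + i) z) (F z))
    (hhom : ∀ (s : ℕ) (c : ℂ) (z : X), P s (c • z) = c ^ s • P s z)
    (hbd : ∀ z ∈ ball (0 : X) 1, ‖F z‖ ≤ 1)
    (hmax : ∀ (j : ι) (z₀ : X), ‖z₀‖ = 1 → ‖P m z₀ j‖ = ‖P m z₀‖)
    {R : ℝ} (hR : R < 1)
    (hroot : 2 * ∑' i : ℕ, R ^ (i + 1) / (β + (m + 1 + i)) ≤ 1 / (β + m))
    {z : X} (hz : ‖z‖ ≤ R) :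
    Summable (fun i : ℕ => ‖P (m + i) z‖ / (β + (m + i))) ∧
      ∑' i : ℕ, ‖P (m + i) z‖ / (β + (m + i)) ≤ ‖z‖ ^ m / (m + β) := by
  have hb : 0 < β + m := by linarith
  obtain ⟨c, hc, hc1, hck, hP⟩ := exists_norm_homogeneous_eq_pow_mul hexp hhom hbd hmax z
  have hradius : 2 * ∑' i : ℕ, ‖z‖ ^ (i + 1) / (β + m + (i + 1 : ℕ)) ≤ 1 / (β + m) := by
    have hindex : ∀ i : ℕ, β + m + (i + 1 : ℕ) = β + (m + 1 + i) := fun i => by push_cast; ring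
    grw [tsum_pow_succ_div_add_le hb (norm_nonneg z) hz hR]
    simpa only [hindex] using hroot
  have hbohr := summable_and_tsum_mul_le_of_le hc hc1 hck (fun i => by positivity)
    (summable_pow_div_add_of_lt_one hb (norm_nonneg z) (hz.trans_lt hR)) (by simpa using hradius)
  have hterm : ∀ i : ℕ, ‖P (m + i) z‖ / (β + (m + i)) =
      ‖z‖ ^ m * (c i * (‖z‖ ^ i / (β + m + i))) := fun i => by
    rw [hP, pow_add, ← add_assoc]
    ring
  simp_rw [hterm, tsum_mul_left]
  refine ⟨hbohr.1.mul_left _, ?_⟩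
  grw [hbohr.2]
  simp [div_eq_mul_inv, add_comm]

theorem stmt_17 {X : Type*} [NormedAddCommGroup X] [NormedSpace ℂ X] [CompleteSpace X]
    (n m : ℕ) (β : ℝ) (hβ : -(m : ℝ) < β)
    (F : X → (Fin n → ℂ)) (P : ℕ → X → (Fin n → ℂ))
    (hF : DifferentiableOn ℂ F (ball (0 : X) 1))
    (hexp : ∀ z ∈ ball (0 : X) 1, HasSum (fun i : ℕ => P (m + i) z) (F z))
    (hhom : ∀ (s : ℕ) (c : ℂ) (z : X), P s (c • z) = c ^ s • P s z)
    (hbd : ∀ z ∈ ball (0 : X) 1, ‖F z‖ ≤ 1)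
    (hconst : ∃ c : ℝ, ∀ z₀ : X, ‖z₀‖ = 1 → ‖P m z₀‖ = c)
    (hmax : ∀ (j : Fin n) (z₀ : X), ‖z₀‖ = 1 → ‖P m z₀ j‖ = ‖P m z₀‖)
    (R : ℝ) (hR : R ∈ Set.Ioo (0 : ℝ) 1)
    (hroot : 1 / (β + m) = 2 * ∑' i : ℕ, R ^ (i + 1) / (β + (m + 1 + i)))
    (huniq : ∀ r ∈ Set.Ioo (0 : ℝ) 1,
        1 / (β + m) = 2 * ∑' i : ℕ, r ^ (i + 1) / (β + (m + 1 + i)) → r = R) :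
    ∀ (z : X) (r : ℝ), ‖z‖ = r → r ≤ R →
      ∑' i : ℕ, ‖P (m + i) z‖ / (β + (m + i)) ≤ r ^ m / (m + β) := by
  rintro z r rfl hr
  exact (stmt_17_general hβ hexp hhom hbd hmax hR.2 hroot.ge hr).2
end
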